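/- Let X_0, X_1, ... be a Markov chain on a finite state space S with transition matrix P, reversible with respect to a stationary distribution π with π(s) > 0 for all s ∈ S, and let ω : S → ℝ be a label function. Let β ∈ [0,1) be such that for every function f : S → ℝ with Σ_s π(s) f(s) = 0 one has Σ_{s,t} π(s) P(s,t) f(s) f(t) ≤ β · Σ_s π(s) f(s)^2 (i.e., β upper-bounds the second eigenvalue λ_2 of P), and set τ_2 = 1/(1 − β) and π_min = min_s π(s). Fix σ_0 ∈ S and ε ∈ (0,1) such that π({σ : ω(σ) ≤ ω(σ_0)}) ≤ ε. Then for the chain started at X_0 = σ_0, the probability that ω(σ_0) is a 2ε-outlier among ω(X_0), ω(X_1), ..., ω(X_k) is at least 1 − (1 + εk/(10τ_2)) · (1/√π_min) · exp(−ε²k/(20τ_2)). -/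

import Mathlib

open scoped Classical

open MeasureTheory Finset
open scoped ENNReal

/-!
Chernoff's method with Gillman's spectral estimate. Let `w` be `exp θ` on the event whose visits are
counted and `1` off it. The exponential moment of the number of visits during the times `0, ..., k`
is the pairing of the initial law with `T ^ k w`, where `T u = w * P u`. In the weighted space
`ℓ²(π / w)`, where `T` is self-adjoint, its norm is at most `l` as soon as
`⟨g, P g⟩_π ≤ l ∑ π g² / w` for all `g`; for this to bound `T` from both sides, no lower bound on
the spectrum of `P` is needed, because `P` has nonnegative entries.

The spectral gap says `P ≤ β + (1 - β) E` as quadratic forms, with `E` the projection to constants.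
By Cauchy-Schwarz the rank-one operator `E` is at most the multiplication by any `v > 0` with
`∑ π / v ≤ 1`, which reduces the estimate on `l` to a scalar inequality. For the test one takes
`θ = ε (1 - β) / 5` and `l = 1 + ε² (1 - β) / 4`.
-/

section TransitionForm

variable {S : Type*} [Fintype S] {P : S → S → ℝ} {π : S → ℝ} {β : ℝ}

/-- Detailed balance of the transition matrix `P` with respect to the weights `π`. -/
def IsReversible (P : S → S → ℝ) (π : S → ℝ) : Prop :=
  ∀ s t, π s * P s t = π t * P t s

/-- The variational form of the inequality `λ₂ ≤ β` for the second eigenvalue of `P`, which is how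
the spectral gap enters the argument. -/
def SecondEigenvalueLE (P : S → S → ℝ) (π : S → ℝ) (β : ℝ) : Prop :=
  ∀ f : S → ℝ, ∑ s, π s * f s = 0 →
    ∑ s, ∑ t, π s * P s t * f s * f t ≤ β * ∑ s, π s * f s ^ 2

/-- The bilinear form `⟨f, P g⟩_π`, bundled in order to have its bilinearity at hand. -/
noncomputable def transitionForm (π : S → ℝ) (P : S → S → ℝ) : LinearMap.BilinForm ℝ (S → ℝ) :=
  Matrix.toBilin' (Matrix.of fun s t => π s * P s t)

theorem transitionForm_apply (f g : S → ℝ) :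
    transitionForm π P f g = ∑ s, ∑ t, π s * P s t * f s * g t := by
  simp only [transitionForm, Matrix.toBilin'_apply, Matrix.of_apply, mul_assoc, mul_left_comm]

theorem transitionForm_eq_sum_mul_sum (f g : S → ℝ) :
    transitionForm π P f g = ∑ s, π s * f s * ∑ t, P s t * g t := by
  simp only [transitionForm_apply, mul_sum]
  exact sum_congr rfl fun s _ => sum_congr rfl fun t _ => by ring

theorem transitionForm_one_right (hProw : ∀ s, ∑ t, P s t = 1) (f : S → ℝ) :
    transitionForm π P f 1 = ∑ s, π s * f s := by
  simp [transitionForm_eq_sum_mul_sum, hProw]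

theorem transitionForm_comm (hrev : IsReversible P π) (f g : S → ℝ) :
    transitionForm π P f g = transitionForm π P g f := by
  rw [transitionForm_apply, transitionForm_apply, sum_comm]
  exact sum_congr rfl fun s _ => sum_congr rfl fun t _ => by rw [hrev]; ring

theorem neg_transitionForm_self_le_abs (hP : ∀ s t, 0 ≤ P s t) (hπ : ∀ s, 0 ≤ π s) (g : S → ℝ) :
    -transitionForm π P g g ≤ transitionForm π P |g| |g| := by
  simp only [transitionForm_apply, ← sum_neg_distrib, mul_assoc (π _ * P _ _), Pi.abs_apply,
    ← abs_mul]
  refine sum_le_sum fun s _ => sum_le_sum fun t _ => ?_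
  rw [← mul_neg]
  exact mul_le_mul_of_nonneg_left (neg_le_abs _) (mul_nonneg (hπ s) (hP s t))

theorem two_mul_transitionForm_le (hP : ∀ s t, 0 ≤ P s t) (hπ : ∀ s, 0 ≤ π s)
    (hrev : IsReversible P π) {c : S → ℝ}
    (hc : ∀ g, transitionForm π P g g ≤ ∑ s, c s * g s ^ 2) (f g : S → ℝ) :
    2 * transitionForm π P f g ≤ ∑ s, c s * f s ^ 2 + ∑ s, c s * g s ^ 2 := by
  have polarization : transitionForm π P (f + g) (f + g) - transitionForm π P (f - g) (f - g)
      = 4 * transitionForm π P f g := by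
    simp only [map_add, map_sub, LinearMap.add_apply, LinearMap.sub_apply,
      transitionForm_comm hrev g f]
    ring
  have parallelogram : ∑ s, c s * (f + g) s ^ 2 + ∑ s, c s * (f - g) s ^ 2
      = 2 * (∑ s, c s * f s ^ 2 + ∑ s, c s * g s ^ 2) := by
    simp only [mul_sum, ← sum_add_distrib, Pi.add_apply, Pi.sub_apply]
    exact sum_congr rfl fun s _ => by ring
  have upper := hc (f + g)
  have lower : -transitionForm π P (f - g) (f - g) ≤ ∑ s, c s * (f - g) s ^ 2 := by
    simpa only [Pi.abs_apply, sq_abs] using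
      (neg_transitionForm_self_le_abs hP hπ (f - g)).trans (hc |f - g|)
  linarith

theorem SecondEigenvalueLE.transitionForm_self_le (hgap : SecondEigenvalueLE P π β)
    (hProw : ∀ s, ∑ t, P s t = 1) (hπsum : ∑ s, π s = 1) (hrev : IsReversible P π) (g : S → ℝ) :
    transitionForm π P g g ≤ β * ∑ s, π s * g s ^ 2 + (1 - β) * (∑ s, π s * g s) ^ 2 := by
  set m := ∑ s, π s * g s with hm
  have centered : ∑ s, π s * (g - m • 1) s = 0 := by
    simp [mul_sub, ← sum_mul, hπsum, hm]
  have form_centered : transitionForm π P (g - m • 1) (g - m • 1)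
      = transitionForm π P g g - m ^ 2 := by
    simp only [map_sub, map_smul, LinearMap.sub_apply, LinearMap.smul_apply, smul_eq_mul,
      transitionForm_comm hrev 1 g, transitionForm_one_right hProw, Pi.one_apply, mul_one, hπsum,
      ← hm]
    ring
  have variance : ∑ s, π s * (g - m • 1) s ^ 2 = ∑ s, π s * g s ^ 2 - m ^ 2 := by
    calc ∑ s, π s * (g - m • 1) s ^ 2
        = ∑ s, (π s * g s ^ 2 - 2 * m * (π s * g s) + m ^ 2 * π s) :=
          sum_congr rfl fun s _ => by
            simp only [Pi.sub_apply, Pi.smul_apply, Pi.one_apply, smul_eq_mul]; ring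
      _ = ∑ s, π s * g s ^ 2 - m ^ 2 := by
          rw [sum_add_distrib, sum_sub_distrib, ← mul_sum, ← mul_sum, hπsum, ← hm]; ring
  have gap := hgap _ centered
  rw [← transitionForm_apply, form_centered, variance] at gap
  linarith

theorem sq_sum_mul_le_of_sum_div_le_one (hπ : ∀ s, 0 ≤ π s) {v : S → ℝ} (hv : ∀ s, 0 < v s)
    (hsum : ∑ s, π s / v s ≤ 1) (g : S → ℝ) :
    (∑ s, π s * g s) ^ 2 ≤ ∑ s, π s * v s * g s ^ 2 := by
  have hnonneg (s : S) : 0 ≤ π s * v s * g s ^ 2 :=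
    mul_nonneg (mul_nonneg (hπ s) (hv s).le) (sq_nonneg _)
  calc (∑ s, π s * g s) ^ 2 ≤ (∑ s, π s * v s * g s ^ 2) * ∑ s, π s / v s :=
        sum_sq_le_sum_mul_sum_of_sq_le_mul _ (fun s _ => hnonneg s)
          (fun s _ => div_nonneg (hπ s) (hv s).le)
          fun s _ => le_of_eq (by have := (hv s).ne'; field_simp)
    _ ≤ ∑ s, π s * v s * g s ^ 2 :=
        mul_le_of_le_one_right (sum_nonneg fun s _ => hnonneg s) hsum

theorem SecondEigenvalueLE.transitionForm_self_le_of_sum_div_le_one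
    (hgap : SecondEigenvalueLE P π β) (hProw : ∀ s, ∑ t, P s t = 1) (hπ : ∀ s, 0 ≤ π s)
    (hπsum : ∑ s, π s = 1) (hrev : IsReversible P π) (hβ : β ≤ 1) {v : S → ℝ}
    (hv : ∀ s, 0 < v s) (hsum : ∑ s, π s / v s ≤ 1) (g : S → ℝ) :
    transitionForm π P g g ≤ ∑ s, π s * (β + (1 - β) * v s) * g s ^ 2 :=
  calc transitionForm π P g g
      ≤ β * ∑ s, π s * g s ^ 2 + (1 - β) * (∑ s, π s * g s) ^ 2 :=
        hgap.transitionForm_self_le hProw hπsum hrev g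
    _ ≤ β * ∑ s, π s * g s ^ 2 + (1 - β) * ∑ s, π s * v s * g s ^ 2 := by
        have := sub_nonneg.2 hβ
        gcongr
        exact sq_sum_mul_le_of_sum_div_le_one hπ hv hsum g
    _ = ∑ s, π s * (β + (1 - β) * v s) * g s ^ 2 := by
        simp only [mul_sum, ← sum_add_distrib]
        exact sum_congr rfl fun s _ => by ring

end TransitionForm

section TiltedOperator

variable {S : Type*} [Fintype S] {P : S → S → ℝ} {π w : S → ℝ} {l : ℝ}

/-- The Feynman-Kac operator `u ↦ w * P u`, whose iterates compute the exponential moments of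
additive functionals of the chain. -/
def tiltedOp (P : S → S → ℝ) (w u : S → ℝ) : S → ℝ :=
  fun s => w s * ∑ t, P s t * u t

theorem transitionForm_tiltedOp_self (hw : ∀ s, 0 < w s) (u : S → ℝ) :
    transitionForm π P (tiltedOp P w u) u = ∑ s, π s / w s * tiltedOp P w u s ^ 2 := by
  rw [transitionForm_eq_sum_mul_sum]
  refine sum_congr rfl fun s _ => ?_
  have := (hw s).ne'
  simp only [tiltedOp]
  field_simp

theorem sum_tiltedOp_sq_le (hP : ∀ s t, 0 ≤ P s t) (hπ : ∀ s, 0 ≤ π s) (hrev : IsReversible P π)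
    (hl : 0 < l) (hw : ∀ s, 0 < w s)
    (hform : ∀ g, transitionForm π P g g ≤ l * ∑ s, π s / w s * g s ^ 2) (u : S → ℝ) :
    ∑ s, π s / w s * tiltedOp P w u s ^ 2 ≤ l ^ 2 * ∑ s, π s / w s * u s ^ 2 := by
  set V := tiltedOp P w u
  have pairing : transitionForm π P V (l • u) = l * ∑ s, π s / w s * V s ^ 2 := by
    rw [map_smul, smul_eq_mul, transitionForm_tiltedOp_self hw]
  have cross := two_mul_transitionForm_le hP hπ hrev (c := fun s => l * (π s / w s))
    (fun g => by simpa only [mul_sum, mul_assoc] using hform g) V (l • u)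
  simp only [pairing, Pi.smul_apply, smul_eq_mul, mul_pow, mul_left_comm _ (l ^ 2), mul_assoc,
    ← mul_sum] at cross
  refine le_of_mul_le_mul_left ?_ hl
  linarith

theorem sum_iterate_tiltedOp_sq_le (hP : ∀ s t, 0 ≤ P s t) (hπ : ∀ s, 0 ≤ π s)
    (hrev : IsReversible P π) (hl : 0 < l) (hw : ∀ s, 0 < w s)
    (hform : ∀ g, transitionForm π P g g ≤ l * ∑ s, π s / w s * g s ^ 2) (u : S → ℝ) (n : ℕ) :
    ∑ s, π s / w s * (tiltedOp P w)^[n] u s ^ 2 ≤ (l ^ n) ^ 2 * ∑ s, π s / w s * u s ^ 2 := by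
  induction n with
  | zero => simp
  | succ n ih =>
    rw [Function.iterate_succ_apply']
    calc ∑ s, π s / w s * tiltedOp P w ((tiltedOp P w)^[n] u) s ^ 2
        ≤ l ^ 2 * ∑ s, π s / w s * (tiltedOp P w)^[n] u s ^ 2 :=
          sum_tiltedOp_sq_le hP hπ hrev hl hw hform _
      _ ≤ l ^ 2 * ((l ^ n) ^ 2 * ∑ s, π s / w s * u s ^ 2) := by gcongr
      _ = (l ^ (n + 1)) ^ 2 * ∑ s, π s / w s * u s ^ 2 := by ring

theorem sq_sum_mul_iterate_tiltedOp_le (hP : ∀ s t, 0 ≤ P s t) (hπ : ∀ s, 0 < π s)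
    (hrev : IsReversible P π) (hl : 0 < l) (hw : ∀ s, 0 < w s)
    (hform : ∀ g, transitionForm π P g g ≤ l * ∑ s, π s / w s * g s ^ 2) (ν : S → ℝ) (n : ℕ) :
    (∑ s, ν s * (tiltedOp P w)^[n] w s) ^ 2
      ≤ (∑ s, ν s ^ 2 / π s * w s) * ((l ^ n) ^ 2 * ∑ s, π s * w s) := by
  have hν (s : S) : 0 ≤ ν s ^ 2 / π s * w s := by have := hπ s; have := hw s; positivity
  calc (∑ s, ν s * (tiltedOp P w)^[n] w s) ^ 2
      ≤ (∑ s, ν s ^ 2 / π s * w s) * ∑ s, π s / w s * (tiltedOp P w)^[n] w s ^ 2 := by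
        refine sum_sq_le_sum_mul_sum_of_sq_le_mul _ (fun s _ => hν s) (fun s _ => ?_)
          fun s _ => le_of_eq ?_
        · have := hπ s; have := hw s; positivity
        · have := (hπ s).ne'; have := (hw s).ne'; field_simp
    _ ≤ (∑ s, ν s ^ 2 / π s * w s) * ((l ^ n) ^ 2 * ∑ s, π s / w s * w s ^ 2) := by
        gcongr
        · exact sum_nonneg fun s _ => hν s
        · exact sum_iterate_tiltedOp_sq_le hP (fun s => (hπ s).le) hrev hl hw hform w n
    _ = (∑ s, ν s ^ 2 / π s * w s) * ((l ^ n) ^ 2 * ∑ s, π s * w s) := by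
        congr 2
        exact sum_congr rfl fun s _ => by have := (hw s).ne'; field_simp

end TiltedOperator

section Tilt

variable {S : Type*} {p : S → Prop} [DecidablePred p] {θ : ℝ}

/-- The weight `exp (θ * 1_p)`, whose product along a path is `exp θ` to the number of visits
to `p`. -/
noncomputable def tilt (p : S → Prop) [DecidablePred p] (θ : ℝ) (s : S) : ℝ :=
  if p s then Real.exp θ else 1

theorem tilt_pos (s : S) : 0 < tilt p θ s := by
  unfold tilt; split_ifs <;> positivity

theorem tilt_le_exp (hθ : 0 ≤ θ) (s : S) : tilt p θ s ≤ Real.exp θ := by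
  unfold tilt; split_ifs
  · exact le_rfl
  · exact Real.one_le_exp hθ

theorem prod_tilt {ι : Type*} (I : Finset ι) (x : ι → S) :
    ∏ i ∈ I, tilt p θ (x i) = Real.exp (θ * #{i ∈ I | p (x i)}) := by
  simp only [tilt, prod_ite, prod_const_one, mul_one, prod_const, ← Real.exp_nat_mul, mul_comm θ]

variable [Fintype S] {P : S → S → ℝ} {π : S → ℝ} {β ε δ r : ℝ}

theorem sum_filter_not_eq_one_sub (hπsum : ∑ s, π s = 1) :
    ∑ s with ¬p s, π s = 1 - ∑ s with p s, π s := by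
  rw [← hπsum, ← sum_filter_add_sum_filter_not univ p π, add_sub_cancel_left]

theorem sum_mul_tilt_le_exp (hπsum : ∑ s, π s = 1) (hε : ∑ s with p s, π s ≤ ε)
    (hp : 0 ≤ ∑ s with p s, π s) (hθ0 : 0 ≤ θ) (hθ1 : θ ≤ 1) :
    ∑ s, π s * tilt p θ s ≤ Real.exp (2 * ε * θ) := by
  have exp_sub_one_nonneg : 0 ≤ Real.exp θ - 1 := sub_nonneg.2 (Real.one_le_exp hθ0)
  have exp_sub_one_le : Real.exp θ - 1 ≤ 2 * θ := by
    simpa only [abs_of_nonneg hθ0] using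
      (le_abs_self _).trans (Real.abs_exp_sub_one_le ((abs_of_nonneg hθ0).trans_le hθ1))
  calc ∑ s, π s * tilt p θ s = (∑ s with p s, π s) * (Real.exp θ - 1) + 1 := by
        simp only [tilt, mul_ite, mul_one, sum_ite, ← sum_mul, sum_filter_not_eq_one_sub hπsum]
        ring
    _ ≤ ε * (2 * θ) + 1 := by have := hp.trans hε; gcongr
    _ = 2 * ε * θ + 1 := by ring
    _ ≤ Real.exp (2 * ε * θ) := Real.add_one_le_exp _

theorem sum_div_ite_le (hπsum : ∑ s, π s = 1) (hδ : δ < 1)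
    (hr : (∑ s with p s, π s) * δ ≤ r * (1 - δ)) :
    ∑ s, π s / (if p s then 1 - δ else 1) ≤ 1 + r := by
  have hδ' : 0 < 1 - δ := sub_pos.2 hδ
  calc ∑ s, π s / (if p s then 1 - δ else 1)
      = 1 + (∑ s with p s, π s) * δ / (1 - δ) := by
        simp only [div_ite, div_one, sum_ite, ← sum_div, sum_filter_not_eq_one_sub hπsum]
        field_simp
        ring
    _ ≤ 1 + r := by gcongr; exact (div_le_iff₀ hδ').2 hr

theorem SecondEigenvalueLE.transitionForm_self_le_tilt (hgap : SecondEigenvalueLE P π β)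
    (hProw : ∀ s, ∑ t, P s t = 1) (hπ : ∀ s, 0 ≤ π s) (hπsum : ∑ s, π s = 1)
    (hrev : IsReversible P π) (hβ0 : 0 ≤ β) (hβ1 : β ≤ 1) (hδ0 : 0 ≤ δ) (hδ1 : δ < 1)
    (hr : (∑ s with p s, π s) * δ ≤ r * (1 - δ)) (g : S → ℝ) :
    transitionForm π P g g
      ≤ (1 + r * (1 - β)) * ∑ s, π s / tilt p ((1 - β) * δ) s * g s ^ 2 := by
  have hδ : 0 < 1 - δ := sub_pos.2 hδ1
  have hr0 : 0 ≤ r :=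
    nonneg_of_mul_nonneg_left ((mul_nonneg (sum_nonneg fun s _ => hπ s) hδ0).trans hr) hδ
  have : 0 ≤ 1 - β := sub_nonneg.2 hβ1
  let v (s : S) : ℝ := (1 + r) * if p s then 1 - δ else 1
  have hv (s : S) : 0 < v s := by dsimp only [v]; split_ifs <;> positivity
  have sum_div_v : ∑ s, π s / v s ≤ 1 := by
    rw [← div_self (by positivity : 1 + r ≠ 0)]
    simp only [v, mul_comm (1 + r), ← div_div, ← sum_div]
    gcongr
    exact sum_div_ite_le hπsum hδ1 hr
  have coeff_le (s : S) :
      β + (1 - β) * v s ≤ (1 + r * (1 - β)) / tilt p ((1 - β) * δ) s := by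
    by_cases hs : p s
    · simp only [v, tilt, if_pos hs]
      rw [div_eq_mul_inv, ← Real.exp_neg]
      have slack : 0 ≤ r * δ * (1 - β) * β := by positivity
      calc β + (1 - β) * ((1 + r) * (1 - δ))
          = (1 + r * (1 - β)) * (1 - (1 - β) * δ) - r * δ * (1 - β) * β := by ring
        _ ≤ (1 + r * (1 - β)) * (1 - (1 - β) * δ) := sub_le_self _ slack
        _ ≤ (1 + r * (1 - β)) * Real.exp (-((1 - β) * δ)) := by
            gcongr; exact Real.one_sub_le_exp_neg _
    · simp only [v, tilt, if_neg hs]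
      exact le_of_eq (by ring)
  calc transitionForm π P g g ≤ ∑ s, π s * (β + (1 - β) * v s) * g s ^ 2 :=
        hgap.transitionForm_self_le_of_sum_div_le_one hProw hπ hπsum hrev hβ1 hv sum_div_v g
    _ ≤ ∑ s, π s * ((1 + r * (1 - β)) / tilt p ((1 - β) * δ) s) * g s ^ 2 := by
        gcongr with s
        · exact hπ s
        · exact coeff_le s
    _ = (1 + r * (1 - β)) * ∑ s, π s / tilt p ((1 - β) * δ) s * g s ^ 2 := by
        rw [mul_sum]
        exact sum_congr rfl fun s _ => by ring

end Tilt

section Paths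

variable {S : Type*} {P : S → S → ℝ} {ν w : S → ℝ}

/-- The probability that the chain with initial law `ν` and transition matrix `P` follows the
path `s`. -/
def pathWeight (ν : S → ℝ) (P : S → S → ℝ) {n : ℕ} (s : Fin (n + 1) → S) : ℝ :=
  ν (s 0) * ∏ i : Fin n, P (s i.castSucc) (s i.succ)

theorem pathWeight_nonneg (hν : ∀ s, 0 ≤ ν s) (hP : ∀ s t, 0 ≤ P s t) {n : ℕ}
    (s : Fin (n + 1) → S) : 0 ≤ pathWeight ν P s :=
  mul_nonneg (hν _) (prod_nonneg fun _ _ => hP _ _)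

theorem pathWeight_cons {n : ℕ} (x : S) (s : Fin (n + 1) → S) :
    pathWeight ν P (Fin.cons x s : Fin (n + 2) → S) = pathWeight (fun y => ν x * P x y) P s := by
  simp [pathWeight, Fin.prod_univ_succ (n := n), mul_assoc]

theorem sum_pathWeight_mul_prod [Fintype S] (n : ℕ) (ν : S → ℝ) :
    ∑ s : Fin (n + 1) → S, pathWeight ν P s * ∏ i, w (s i)
      = ∑ x, ν x * (tiltedOp P w)^[n] w x := by
  induction n generalizing ν with
  | zero =>
    refine Fintype.sum_equiv (Equiv.funUnique (Fin 1) S) _ _ fun s => ?_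
    simp [pathWeight]
  | succ n ih =>
    calc ∑ s : Fin (n + 2) → S, pathWeight ν P s * ∏ i, w (s i)
        = ∑ x, ∑ s : Fin (n + 1) → S,
            pathWeight (fun y => ν x * P x y) P s * (w x * ∏ i, w (s i)) := by
          rw [← (Fin.consEquiv fun _ => S).sum_comp, Fintype.sum_prod_type]
          simp [Fin.consEquiv, pathWeight_cons, Fin.prod_univ_succ (n := n + 1)]
      _ = ∑ x, ν x * (tiltedOp P w)^[n + 1] w x := by
          refine sum_congr rfl fun x _ => ?_
          simp only [mul_left_comm _ (w x), ← mul_sum, ih, Function.iterate_succ_apply', tiltedOp,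
            mul_assoc]

end Paths

section MarkovChain

variable {Ω S : Type*} [MeasurableSpace Ω] {μ : Measure Ω} {P : S → S → ℝ}
  {π ν : S → ℝ} {X : ℕ → Ω → S}

/-- `X` is a Markov chain with transition matrix `P` and initial law `ν`, expressed through the
probabilities of finite paths. The `X n` need not be measurable, so only the subadditivity of `μ` is
available for events about the chain. -/
def IsMarkovChain (μ : Measure Ω) (P : S → S → ℝ) (ν : S → ℝ) (X : ℕ → Ω → S) : Prop :=
  ∀ (n : ℕ) (s : ℕ → S), μ {a | ∀ i ≤ n, X i a = s i}
    = ENNReal.ofReal (ν (s 0) * ∏ i ∈ range n, P (s i) (s (i + 1)))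

theorem IsMarkovChain.measure_path (hX : IsMarkovChain μ P ν X) {k : ℕ} (s : Fin (k + 1) → S) :
    μ {a | (fun i : Fin (k + 1) => X i a) = s} = ENNReal.ofReal (pathWeight ν P s) := by
  let extend (i : ℕ) : S := s (Fin.ofNat (k + 1) i)
  have extend_val (i : Fin (k + 1)) : extend i = s i := congrArg s (Fin.cast_val_eq_self i)
  have path_eq : {a | (fun i : Fin (k + 1) => X i a) = s} = {a | ∀ i ≤ k, X i a = extend i} := by
    ext a
    simp only [Set.mem_ofPred_eq, funext_iff, ← extend_val, Fin.forall_iff, Nat.lt_succ_iff]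
  have weight_eq : pathWeight ν P s
      = ν (extend 0) * ∏ i ∈ range k, P (extend i) (extend (i + 1)) := by
    rw [← Fin.prod_univ_eq_prod_range fun i => P (extend i) (extend (i + 1))]
    simp only [pathWeight, ← extend_val, Fin.val_zero, Fin.val_castSucc, Fin.val_succ]
  rw [path_eq, weight_eq, hX]

variable [Fintype S]

theorem IsMarkovChain.measure_one_le_le (hX : IsMarkovChain μ P ν X) (hν : ∀ s, 0 ≤ ν s)
    (hP : ∀ s t, 0 ≤ P s t) {k : ℕ} {φ : (Fin (k + 1) → S) → ℝ} (hφ : ∀ s, 0 ≤ φ s) :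
    μ {a | 1 ≤ φ fun i => X i a} ≤ ENNReal.ofReal (∑ s, pathWeight ν P s * φ s) := by
  have hweight (s : Fin (k + 1) → S) : 0 ≤ pathWeight ν P s := pathWeight_nonneg hν hP s
  calc μ {a | 1 ≤ φ fun i => X i a}
      ≤ μ (⋃ s ∈ ({s | 1 ≤ φ s} : Finset (Fin (k + 1) → S)),
          {a | (fun i : Fin (k + 1) => X i a) = s}) :=
        measure_mono fun a ha => by simpa using ha
    _ ≤ ∑ s with 1 ≤ φ s, μ {a | (fun i : Fin (k + 1) => X i a) = s} :=
        measure_biUnion_finset_le _ _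
    _ ≤ ∑ s with 1 ≤ φ s, ENNReal.ofReal (pathWeight ν P s * φ s) := by
        gcongr with s hs
        rw [hX.measure_path]
        exact ENNReal.ofReal_le_ofReal
          (le_mul_of_one_le_right (hweight s) (mem_filter.1 hs).2)
    _ ≤ ∑ s, ENNReal.ofReal (pathWeight ν P s * φ s) :=
        sum_le_sum_of_subset (filter_subset _ _)
    _ = ENNReal.ofReal (∑ s, pathWeight ν P s * φ s) :=
        (ENNReal.ofReal_sum_of_nonneg fun s _ => mul_nonneg (hweight s) (hφ s)).symm

variable {p : S → Prop} [DecidablePred p] {β ε δ r θ : ℝ}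

theorem IsMarkovChain.measure_lt_visits_le (hX : IsMarkovChain μ P ν X) (hν : ∀ s, 0 ≤ ν s)
    (hP : ∀ s t, 0 ≤ P s t) (hθ : 0 ≤ θ) (c : ℝ) (k : ℕ) :
    μ {a | c < #{i ∈ range (k + 1) | p (X i a)}}
      ≤ ENNReal.ofReal
          (Real.exp (-(θ * c)) * ∑ s, ν s * (tiltedOp P (tilt p θ))^[k] (tilt p θ) s) := by
  let φ (s : Fin (k + 1) → S) : ℝ := Real.exp (-(θ * c)) * ∏ i, tilt p θ (s i)
  have hφ (s : Fin (k + 1) → S) : 0 ≤ φ s :=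
    mul_nonneg (Real.exp_pos _).le (prod_nonneg fun i _ => (tilt_pos _).le)
  have one_le_φ (a : Ω) (ha : c < #{i ∈ range (k + 1) | p (X i a)}) : 1 ≤ φ fun i => X i a := by
    simp only [φ]
    rw [Fin.prod_univ_eq_prod_range fun i => tilt p θ (X i a), prod_tilt, ← Real.exp_add,
      Real.one_le_exp_iff, neg_add_eq_sub, sub_nonneg]
    gcongr
  calc μ {a | c < #{i ∈ range (k + 1) | p (X i a)}} ≤ μ {a | 1 ≤ φ fun i => X i a} :=
        measure_mono one_le_φ
    _ ≤ ENNReal.ofReal (∑ s, pathWeight ν P s * φ s) := hX.measure_one_le_le hν hP hφ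
    _ = _ := by
        simp only [φ, mul_left_comm _ (Real.exp _), ← mul_sum, sum_pathWeight_mul_prod]

theorem sum_mul_iterate_tiltedOp_tilt_le (hgap : SecondEigenvalueLE P π β)
    (hP : ∀ s t, 0 ≤ P s t) (hProw : ∀ s, ∑ t, P s t = 1) (hπ : ∀ s, 0 < π s)
    (hπsum : ∑ s, π s = 1) (hrev : IsReversible P π) (hβ0 : 0 ≤ β) (hβ1 : β ≤ 1) (hδ0 : 0 ≤ δ)
    (hδ1 : δ < 1) (hε : ∑ s with p s, π s ≤ ε) (hr : ε * δ ≤ r * (1 - δ)) (k : ℕ) :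
    ∑ s, ν s * (tiltedOp P (tilt p ((1 - β) * δ)))^[k] (tilt p ((1 - β) * δ)) s
      ≤ √(∑ s, ν s ^ 2 / π s) * Real.exp ((1 - β) * (δ / 2 + ε * δ + r * k)) := by
  set θ := (1 - β) * δ with hθ
  have hγ : 0 ≤ 1 - β := sub_nonneg.2 hβ1
  have hθ0 : 0 ≤ θ := mul_nonneg hγ hδ0
  have hθ1 : θ ≤ 1 := mul_le_one₀ (sub_le_self 1 hβ0) hδ0 hδ1.le
  have hp : 0 ≤ ∑ s with p s, π s := sum_nonneg fun s _ => (hπ s).le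
  have hr0 : 0 ≤ r :=
    nonneg_of_mul_nonneg_left ((mul_nonneg (hp.trans hε) hδ0).trans hr) (sub_pos.2 hδ1)
  have hl : 0 < 1 + r * (1 - β) := by positivity
  have hD : 0 ≤ ∑ s, ν s ^ 2 / π s := sum_nonneg fun s _ => div_nonneg (sq_nonneg _) (hπ s).le
  have sum_tilt_nonneg : 0 ≤ ∑ s, π s * tilt p θ s :=
    sum_nonneg fun s _ => mul_nonneg (hπ s).le (tilt_pos s).le
  refine (abs_le_of_sq_le_sq' ?_ (by positivity)).2
  calc (∑ s, ν s * (tiltedOp P (tilt p θ))^[k] (tilt p θ) s) ^ 2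
      ≤ (∑ s, ν s ^ 2 / π s * tilt p θ s)
          * (((1 + r * (1 - β)) ^ k) ^ 2 * ∑ s, π s * tilt p θ s) :=
        sq_sum_mul_iterate_tiltedOp_le hP hπ hrev hl tilt_pos
          (hgap.transitionForm_self_le_tilt hProw (fun s => (hπ s).le) hπsum hrev hβ0 hβ1 hδ0 hδ1
            ((mul_le_mul_of_nonneg_right hε hδ0).trans hr)) ν k
    _ ≤ ((∑ s, ν s ^ 2 / π s) * Real.exp θ)
          * ((Real.exp (r * (1 - β)) ^ k) ^ 2 * Real.exp (2 * ε * θ)) := by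
        gcongr
        · rw [sum_mul]
          exact sum_le_sum fun s _ => mul_le_mul_of_nonneg_left (tilt_le_exp hθ0 s)
            (div_nonneg (sq_nonneg _) (hπ s).le)
        · linarith [Real.add_one_le_exp (r * (1 - β))]
        · exact sum_mul_tilt_le_exp hπsum hε hp hθ0 hθ1
    _ = (√(∑ s, ν s ^ 2 / π s) * Real.exp ((1 - β) * (δ / 2 + ε * δ + r * k))) ^ 2 := by
        simp only [mul_pow, Real.sq_sqrt hD, ← Real.exp_nat_mul, mul_assoc, ← Real.exp_add, hθ]
        congr 2; push_cast; ring

theorem IsMarkovChain.measure_lt_visits_le_exp (hX : IsMarkovChain μ P ν X)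
    (hν : ∀ s, 0 ≤ ν s) (hgap : SecondEigenvalueLE P π β) (hP : ∀ s t, 0 ≤ P s t)
    (hProw : ∀ s, ∑ t, P s t = 1) (hπ : ∀ s, 0 < π s) (hπsum : ∑ s, π s = 1)
    (hrev : IsReversible P π) (hβ0 : 0 ≤ β) (hβ1 : β ≤ 1) (hδ0 : 0 ≤ δ) (hδ1 : δ < 1)
    (hε : ∑ s with p s, π s ≤ ε) (hr : ε * δ ≤ r * (1 - δ)) (c : ℝ) (k : ℕ) :
    μ {a | c < #{i ∈ range (k + 1) | p (X i a)}}
      ≤ ENNReal.ofReal (√(∑ s, ν s ^ 2 / π s)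
          * Real.exp ((1 - β) * (δ / 2 + ε * δ + r * k - δ * c))) := by
  refine (hX.measure_lt_visits_le hν hP (mul_nonneg (sub_nonneg.2 hβ1) hδ0) c k).trans
    (ENNReal.ofReal_le_ofReal ?_)
  calc Real.exp (-((1 - β) * δ * c)) * _
      ≤ Real.exp (-((1 - β) * δ * c))
          * (√(∑ s, ν s ^ 2 / π s) * Real.exp ((1 - β) * (δ / 2 + ε * δ + r * k))) := by
        refine mul_le_mul_of_nonneg_left ?_ (Real.exp_pos _).le
        exact sum_mul_iterate_tiltedOp_tilt_le hgap hP hProw hπ hπsum hrev hβ0 hβ1 hδ0 hδ1 hε hr k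
    _ = √(∑ s, ν s ^ 2 / π s) * Real.exp ((1 - β) * (δ / 2 + ε * δ + r * k - δ * c)) := by
        rw [mul_left_comm, ← Real.exp_add]
        ring_nf

theorem exp_le_one_add_mul_exp_sq {x : ℝ} (hx : 0 ≤ x) :
    Real.exp x ≤ (1 + x) * Real.exp (x ^ 2) := by
  have one_le : 1 ≤ (1 + x) * Real.exp (x ^ 2 - x) :=
    calc 1 ≤ 1 + x ^ 3 := le_add_of_nonneg_right (by positivity)
      _ = (1 + x) * (x ^ 2 - x + 1) := by ring
      _ ≤ (1 + x) * Real.exp (x ^ 2 - x) := by gcongr; exact Real.add_one_le_exp _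
  calc Real.exp x ≤ Real.exp x * ((1 + x) * Real.exp (x ^ 2 - x)) :=
        le_mul_of_one_le_right (Real.exp_pos x).le one_le
    _ = (1 + x) * Real.exp (x ^ 2) := by rw [mul_left_comm, ← Real.exp_add, add_sub_cancel]

theorem exp_chernoff_exponent_le {γ : ℝ} (hε : 0 ≤ ε) (hγ0 : 0 ≤ γ) (hγ1 : γ ≤ 1) {k : ℝ}
    (hk : 1 ≤ k) :
    Real.exp (γ * (ε / 5 / 2 + ε * (ε / 5) + ε ^ 2 / 4 * k - ε / 5 * (2 * ε * (k + 1))))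
      ≤ (1 + ε * k * γ / 10) * Real.exp (-(ε ^ 2) * k * γ / 20) := by
  set x := ε * γ / 10 with hx
  have hx0 : 0 ≤ x := by positivity
  have hxk : x ≤ ε * k * γ / 10 := by
    rw [mul_right_comm, mul_div_right_comm]; exact le_mul_of_one_le_right hx0 hk
  have hsq : x ^ 2 ≤ ε ^ 2 * γ / 100 := by
    calc x ^ 2 = ε ^ 2 * γ / 100 * γ := by rw [hx]; ring
      _ ≤ ε ^ 2 * γ / 100 := mul_le_of_le_one_right (by positivity) hγ1
  have hεk : 0 ≤ ε ^ 2 * γ * k := by positivity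
  have hεγ : 0 ≤ ε ^ 2 * γ := by positivity
  calc _ = Real.exp x * Real.exp (-(ε ^ 2 * γ) / 5 - 3 * (ε ^ 2 * γ * k) / 20) := by
        rw [← Real.exp_add, hx]; ring_nf
    _ ≤ (1 + x) * Real.exp (x ^ 2)
          * Real.exp (-(ε ^ 2 * γ) / 5 - 3 * (ε ^ 2 * γ * k) / 20) := by
        gcongr; exact exp_le_one_add_mul_exp_sq hx0
    _ = (1 + x) * Real.exp (x ^ 2 - ε ^ 2 * γ / 5 - 3 * (ε ^ 2 * γ * k) / 20) := by
        rw [mul_assoc, ← Real.exp_add]; ring_nf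
    _ ≤ (1 + ε * k * γ / 10) * Real.exp (-(ε ^ 2) * k * γ / 20) := by
        gcongr
        linarith

theorem IsMarkovChain.measure_two_mul_lt_visits_le (hX : IsMarkovChain μ P ν X)
    (hν : ∀ s, 0 ≤ ν s) (hgap : SecondEigenvalueLE P π β) (hP : ∀ s t, 0 ≤ P s t)
    (hProw : ∀ s, ∑ t, P s t = 1) (hπ : ∀ s, 0 < π s) (hπsum : ∑ s, π s = 1)
    (hrev : IsReversible P π) (hβ0 : 0 ≤ β) (hβ1 : β ≤ 1) (hε : ∑ s with p s, π s ≤ ε) (k : ℕ) :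
    μ {a | 2 * ε * (k + 1) < #{i ∈ range (k + 1) | p (X i a)}}
      ≤ ENNReal.ofReal ((1 + ε * k * (1 - β) / 10) * √(∑ s, ν s ^ 2 / π s)
          * Real.exp (-(ε ^ 2) * k * (1 - β) / 20)) := by
  have hε0 : 0 ≤ ε := (sum_nonneg fun s _ => (hπ s).le).trans hε
  rcases lt_or_ge 1 ε with hε1 | hε1
  · have no_excess : {a | 2 * ε * (k + 1) < #{i ∈ range (k + 1) | p (X i a)}} = ∅ := by
      refine Set.eq_empty_of_forall_notMem fun a => ?_
      rw [Set.mem_ofPred_eq, not_lt]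
      calc (#{i ∈ range (k + 1) | p (X i a)} : ℝ) ≤ k + 1 := by
            exact_mod_cast (card_filter_le _ _).trans_eq (card_range _)
        _ ≤ 2 * ε * (k + 1) := le_mul_of_one_le_left (by positivity) (by linarith)
    simp [no_excess]
  have chernoff {δ r : ℝ} (hδ0 : 0 ≤ δ) (hδ1 : δ < 1) (hr : ε * δ ≤ r * (1 - δ)) :=
    hX.measure_lt_visits_le_exp hν hgap hP hProw hπ hπsum hrev hβ0 hβ1 hδ0 hδ1 hε hr
      (2 * ε * (k + 1)) k
  rcases k.eq_zero_or_pos with rfl | hk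
  · simpa using chernoff (δ := 0) (r := 0) le_rfl one_pos (by simp)
  · have budget : ε * (ε / 5) ≤ ε ^ 2 / 4 * (1 - ε / 5) := by nlinarith
    refine (chernoff (by positivity) (by linarith) budget).trans (ENNReal.ofReal_le_ofReal ?_)
    rw [mul_comm √_, mul_right_comm (1 + _)]
    gcongr
    exact exp_chernoff_exponent_le hε0 (sub_nonneg.2 hβ1) (sub_le_self 1 hβ0)
      (Nat.one_le_cast.2 hk)

end MarkovChain

theorem sqrt_sum_dirac_sq_div_le_one_div_sqrt_inf' {S : Type*} [Fintype S] [Nonempty S]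
    {π : S → ℝ} (hπ : ∀ s, 0 < π s) (σ₀ : S) :
    √(∑ s, (if s = σ₀ then 1 else 0) ^ 2 / π s) ≤ 1 / √(univ.inf' univ_nonempty π) := by
  have inf'_pos : 0 < univ.inf' univ_nonempty π := (lt_inf'_iff _).2 fun s _ => hπ s
  have sum_eq : ∑ s, (if s = σ₀ then (1 : ℝ) else 0) ^ 2 / π s = 1 / π σ₀ := by
    simp [ite_pow, ite_div]
  rw [sum_eq, Real.sqrt_div zero_le_one, Real.sqrt_one]
  gcongr
  exact inf'_le _ (mem_univ σ₀)

theorem power_of_sqrt_eps_test_general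
    {Ω S : Type*} [MeasurableSpace Ω] [Fintype S]
    (μ : Measure Ω) [IsProbabilityMeasure μ]
    (P : S → S → ℝ) (π ν : S → ℝ) (p : S → Prop) [DecidablePred p]
    (hP : ∀ s t, 0 ≤ P s t) (hProw : ∀ s, ∑ t, P s t = 1)
    (hπ : ∀ s, 0 < π s) (hπsum : ∑ s, π s = 1) (hrev : IsReversible P π)
    (β : ℝ) (hβ0 : 0 ≤ β) (hβ1 : β < 1) (hgap : SecondEigenvalueLE P π β)
    (τ₂ : ℝ) (hτ₂ : τ₂ = 1 / (1 - β)) (ε : ℝ) (hε : ∑ s with p s, π s ≤ ε)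
    (X : ℕ → Ω → S) (hν : ∀ s, 0 ≤ ν s) (hX : IsMarkovChain μ P ν X) (k : ℕ) :
    ENNReal.ofReal
        (1 - (1 + ε * k / (10 * τ₂)) * √(∑ s, ν s ^ 2 / π s)
          * Real.exp (-(ε ^ 2) * k / (20 * τ₂)))
      ≤ μ {a | (#{i ∈ range (k + 1) | p (X i a)} : ℝ) ≤ 2 * ε * (k + 1)} := by
  have hε0 : 0 ≤ ε := (sum_nonneg fun s _ => (hπ s).le).trans hε
  have div_τ₂ (x c : ℝ) : x / (c * τ₂) = x * (1 - β) / c := by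
    rw [hτ₂, mul_one_div, div_div_eq_mul_div]
  have : 0 < 1 - β := sub_pos.2 hβ1
  rw [div_τ₂, div_τ₂, ENNReal.ofReal_sub _ (by positivity), ENNReal.ofReal_one, tsub_le_iff_right]
  set E := {a | (#{i ∈ range (k + 1) | p (X i a)} : ℝ) ≤ 2 * ε * (k + 1)} with hE
  calc 1 = μ (E ∪ Eᶜ) := by rw [Set.union_compl_self, measure_univ]
    _ ≤ μ E + μ Eᶜ := measure_union_le _ _
    _ ≤ _ := by
      gcongr
      simpa only [hE, Set.compl_ofPred, not_le] using
        hX.measure_two_mul_lt_visits_le hν hgap hP hProw hπ hπsum hrev hβ0 hβ1.le hε k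

/-- statistical power of the `√ε` test.  Let `X 0, X 1, ...` be a Markov
chain on a finite state space `S` with transition matrix `P`, reversible with respect to a
stationary distribution `π` with `π s > 0` for all `s`, and let `ω : S → ℝ` be a label
function.  Let `β ∈ [0,1)` upper-bound the second eigenvalue `λ₂` of `P`, in the sense that
for every `f : S → ℝ` with `∑ s, π s * f s = 0` one has
`∑ s t, π s * P s t * f s * f t ≤ β * ∑ s, π s * f s ^ 2`, and set `τ₂ = 1/(1−β)` and
`π_min = min_s π s`.  Fix `σ₀ ∈ S` and `ε ∈ (0,1)` with `π {σ | ω σ ≤ ω σ₀} ≤ ε`.  Then for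
the chain started at `X 0 = σ₀`, the probability that `ω σ₀` is a `2ε`-outlier among
`ω (X 0), ω (X 1), ..., ω (X k)` is at least
`1 − (1 + εk/(10τ₂)) · (1/√π_min) · exp(−ε²k/(20τ₂))`. -/
theorem power_of_sqrt_eps_test
    {Ω S : Type*} [MeasurableSpace Ω] [Fintype S] [Nonempty S]
    (μ : Measure Ω) [IsProbabilityMeasure μ]
    (P : S → S → ℝ) (π : S → ℝ) (ω : S → ℝ)
    (hPnonneg : ∀ s t, 0 ≤ P s t) (hProw : ∀ s, ∑ t, P s t = 1)
    (hπpos : ∀ s, 0 < π s) (hπsum : ∑ s, π s = 1)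
    -- reversibility (detailed balance)
    (hrev : ∀ s t, π s * P s t = π t * P t s)
    (β : ℝ) (hβ0 : 0 ≤ β) (hβ1 : β < 1)
    -- `β` upper-bounds the second eigenvalue `λ₂` of `P`
    (hgap : ∀ f : S → ℝ, (∑ s, π s * f s = 0) →
      ∑ s, ∑ t, π s * P s t * f s * f t ≤ β * ∑ s, π s * f s ^ 2)
    (τ₂ πmin : ℝ)
    (hτ₂ : τ₂ = 1 / (1 - β))
    (hπmin : πmin = Finset.univ.inf' Finset.univ_nonempty π)
    (σ₀ : S) (ε : ℝ) (hε0 : 0 < ε) (hε1 : ε < 1)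
    -- `π {σ : ω σ ≤ ω σ₀} ≤ ε`
    (hσ₀ : ∑ s ∈ Finset.univ.filter (fun s => ω s ≤ ω σ₀), π s ≤ ε)
    -- `X 0, X 1, ...` is the Markov chain with transition matrix `P` started at `X 0 = σ₀`
    (X : ℕ → Ω → S)
    (hjoint : ∀ (n : ℕ) (s : ℕ → S),
      μ {a | ∀ i ≤ n, X i a = s i}
        = ENNReal.ofReal ((if s 0 = σ₀ then (1 : ℝ) else 0)
            * ∏ i ∈ Finset.range n, P (s i) (s (i + 1))))
    (k : ℕ) :
    ENNReal.ofReal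
        (1 - (1 + ε * k / (10 * τ₂)) * (1 / Real.sqrt πmin)
          * Real.exp (-(ε ^ 2) * k / (20 * τ₂)))
      ≤ μ {a | (((Finset.range (k + 1)).filter (fun i => ω (X i a) ≤ ω σ₀)).card : ℝ)
          ≤ 2 * ε * (k + 1)} := by
  let ν (s : S) : ℝ := if s = σ₀ then 1 else 0
  have hν (s : S) : 0 ≤ ν s := by dsimp only [ν]; positivity
  have hνπ : √(∑ s, ν s ^ 2 / π s) ≤ 1 / √πmin :=
    hπmin ▸ sqrt_sum_dirac_sq_div_le_one_div_sqrt_inf' hπpos σ₀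
  have hτ₂pos : 0 < τ₂ := hτ₂ ▸ one_div_pos.2 (sub_pos.2 hβ1)
  refine le_trans (ENNReal.ofReal_le_ofReal ?_) (power_of_sqrt_eps_test_general μ P π ν _ hPnonneg
    hProw hπpos hπsum hrev β hβ0 hβ1 hgap τ₂ hτ₂ ε hσ₀ X hν hjoint k)
  gcongr
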